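/- arXiv:2410.10593 — 7 statements merged into one kernel-verified Lean document; each statement's English description precedes it below -/
import Mathlib

section
/- Let n be a natural number, α and β types, and let i : Fin n → α and j : Fin n → β. Consider the subgroup H = {σ ∈ Perm(Fin n) | i ∘ σ = i} of permutations fixing i, acting on functions Fin n → β by σ • j = j ∘ σ⁻¹. Then the cardinality of the orbit of j under H equals (∏_a (#{x | i x = a})!) / (∏_{(a,b)} (#{x | i x = a and j x = b})!), where the products range over all values a of i and all pairs of values (a,b) of (i,j). In the paper's notation, the orbit size is ξ(i)! / ξ(i,j)!. -/
open scoped BigOperators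

lemma stab_card_aux {n : ℕ} {γ : Type*} [DecidableEq γ] (f : Fin n → γ) :
    (Finset.univ.filter fun σ : Equiv.Perm (Fin n) => f ∘ ⇑σ = f).card =
      ∏ a ∈ Finset.univ.image f,
        (Finset.univ.filter fun x : Fin n => f x = a).card.factorial := by
  have h := DomMulAct.stabilizer_card' f
  simp only [Fintype.card_subtype] at h
  convert h

/-- The size of the orbit of `j` under the permutations fixing `i` (acting by
`σ • j = j ∘ σ⁻¹`) is `ξ(i)! / ξ(i,j)!`. -/
theorem stmt2 {n : ℕ} {α β : Type*} [DecidableEq α] [DecidableEq β]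
    (i : Fin n → α) (j : Fin n → β) :
    (Finset.image (fun σ : Equiv.Perm (Fin n) => j ∘ ⇑σ.symm)
        (Finset.univ.filter fun σ : Equiv.Perm (Fin n) => i ∘ ⇑σ = i)).card =
      (∏ a ∈ Finset.univ.image i,
          (Finset.univ.filter fun x : Fin n => i x = a).card.factorial) /
        (∏ ab ∈ Finset.univ.image (fun x : Fin n => (i x, j x)),
          (Finset.univ.filter fun x : Fin n => i x = ab.1 ∧ j x = ab.2).card.factorial) := by
  have h2 := stab_card_aux (fun x : Fin n => (i x, j x))
  simp only [Prod.ext_iff] at h2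
  rw [← stab_card_aux i, ← h2]
  have hpos : 0 < (Finset.univ.filter fun σ : Equiv.Perm (Fin n) =>
      (fun x : Fin n => (i x, j x)) ∘ ⇑σ = (fun x : Fin n => (i x, j x))).card :=
    Finset.card_pos.mpr ⟨1, by simp⟩
  symm
  apply Nat.div_eq_of_eq_mul_left hpos
  rw [Finset.card_eq_sum_card_image (fun σ : Equiv.Perm (Fin n) => j ∘ ⇑σ.symm)]
  apply Finset.sum_const_nat
  intro k hk
  obtain ⟨s, hs, rfl⟩ := Finset.mem_image.mp hk
  have hs' : ∀ x, i (s x) = i x := fun x => congrFun (Finset.mem_filter.mp hs).2 x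
  symm
  apply Finset.card_bij (fun τ _ => s * τ)
  · intro τ hτ
    have ht : ∀ x, i (τ x) = i x ∧ j (τ x) = j x := fun x =>
      Prod.ext_iff.mp (congrFun (Finset.mem_filter.mp hτ).2 x)
    simp only [Finset.mem_filter, Finset.mem_univ, true_and]
    refine ⟨funext fun x => ?_, funext fun x => ?_⟩
    · simp [hs', (ht x).1]
    · have := (ht (τ.symm (s.symm x))).2
      rw [Equiv.apply_symm_apply] at this
      exact this.symm
  · intro a _ b _ h
    exact mul_left_cancel h
  · intro σ hσ
    simp only [Finset.mem_filter, Finset.mem_univ, true_and] at hσ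
    refine ⟨s⁻¹ * σ, ?_, by simp⟩
    simp only [Finset.mem_filter, Finset.mem_univ, true_and]
    funext x
    have h1 := congrFun hσ.1 x
    have h3 := congrFun hσ.2 (σ x)
    have h4 := hs' (s.symm (σ x))
    simp only [Function.comp_apply, Equiv.symm_apply_apply, Equiv.apply_symm_apply] at h1 h3 h4
    exact Prod.ext (h4.symm.trans h1) h3.symm
end

section
/- Let R be a commutative ring and work in the polynomial ring R[X_{(r,s)}] in commuting variables X_{(r,s)} indexed by pairs (r,s) with r a row label and s a site index. For a tuple (i₁,…,i_k) of site indices, define the Slater operator S(i₁,…,i_k) = det of the k×k matrix whose (r,c) entry is X_{(r,i_c)}. Then for all p ≥ q ≥ 1 and all site indices u₁,…,u_p and w₁,…,w_q, the exchange (Sylvester) relation holds: S(u₁,…,u_p) · S(w₁,…,w_q) = Σ_{j=1}^{p} S(u₁,…,u_{j−1}, w₁, u_{j+1},…,u_p) · S(u_j, w₂,…,w_q). -/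
open scoped BigOperators

/-- The Slater operator `S(i₁,…,i_k)`: the determinant of the `k × k` matrix whose
`(r,c)` entry is the commuting variable `X (r, i c)`. -/
noncomputable def slaterOp {R : Type*} [CommRing R] {α : Type*} {k : ℕ} (i : Fin k → α) :
    MvPolynomial (ℕ × α) R :=
  (Matrix.of fun r c : Fin k => MvPolynomial.X ((r : ℕ), i c)).det

/-- The Sylvester exchange relation between Slater operators: for `p ≥ q ≥ 1`,
`S(u₁,…,u_p)·S(w₁,…,w_q) = Σ_{j=1}^p S(u₁,…,u_{j−1},w₁,u_{j+1},…,u_p)·S(u_j,w₂,…,w_q)`. -/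
theorem stmt3 {R : Type*} [CommRing R] {α : Type*} {p q : ℕ} (hq : 1 ≤ q) (hpq : q ≤ p)
    (u : Fin p → α) (w : Fin q → α) :
    slaterOp (R := R) u * slaterOp (R := R) w =
      ∑ j : Fin p,
        slaterOp (R := R) (Function.update u j (w ⟨0, hq⟩)) *
          slaterOp (R := R) (Function.update w ⟨0, hq⟩ (u j)) := by
  classical
  set A : Matrix (Fin p) (Fin p) (MvPolynomial (ℕ × α) R) :=
    Matrix.of fun r c : Fin p => MvPolynomial.X ((r : ℕ), u c) with hA
  set B : Matrix (Fin q) (Fin q) (MvPolynomial (ℕ × α) R) :=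
    Matrix.of fun r c : Fin q => MvPolynomial.X ((r : ℕ), w c) with hB
  set z : Fin q := ⟨0, hq⟩ with hz
  let b : Fin p → MvPolynomial (ℕ × α) R := fun r => MvPolynomial.X ((r : ℕ), w z)
  let b' : Fin q → MvPolynomial (ℕ × α) R := fun r => MvPolynomial.X ((r : ℕ), w z)
  let a : Fin p → Fin q → MvPolynomial (ℕ × α) R := fun j r => MvPolynomial.X ((r : ℕ), u j)
  have h1 : ∀ j, slaterOp (R := R) (Function.update u j (w z)) = A.cramer b j := by
    intro j
    rw [Matrix.cramer_apply, slaterOp]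
    congr 1
    ext1 r c
    by_cases h : c = j
    · subst h; simp [b]
    · simp [h, hA]
  have h2 : ∀ j, slaterOp (R := R) (Function.update w z (u j)) = B.cramer (a j) z := by
    intro j
    rw [Matrix.cramer_apply, slaterOp]
    congr 1
    ext1 r c
    by_cases h : c = z
    · subst h; simp [a]
    · simp [h, hB]
  have h3 : slaterOp (R := R) w = B.cramer b' z := by
    rw [Matrix.cramer_apply, slaterOp]
    congr 1
    ext1 r c
    by_cases h : c = z
    · subst h; simp [b']
    · simp [h, hB]
  have h4 : A.det • b' = ∑ j, A.cramer b j • a j := by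
    ext1 r
    have := congrFun (Matrix.mulVec_cramer A b) (Fin.castLE hpq r)
    simp only [Matrix.mulVec, dotProduct, Pi.smul_apply, smul_eq_mul] at this
    simp only [Pi.smul_apply, Finset.sum_apply, smul_eq_mul]
    refine this.symm.trans (Finset.sum_congr rfl fun j _ => ?_)
    rw [mul_comm]
    rfl
  have h5 : slaterOp (R := R) u = A.det := rfl
  simp only [h1, h2]
  rw [h3, h5]
  have := congrFun (congrArg B.cramer h4) z
  rw [map_smul, map_sum] at this
  simpa [Finset.sum_apply] using this
end

section
/- Fix natural numbers N and m, work in the polynomial ring R[X_{(r,s)}] in commuting variables indexed by (r,s) ∈ Fin N × Fin m over a commutative ring R, and for k ≤ min(N,m) let D_k = det of the k×k matrix with (r,c) entry X_{(r,c)} (the top-left generic minor, which is the Slater operator S(1,2,…,k)). Let λ be a Young diagram whose column lengths k₁,…,k_p are all at most min(N,m), and let Y(h_λ) = D_{k₁}···D_{k_p} be the Young operator of the tableau h_λ whose r-th row is filled with the entry r. Then for all x < y in Fin m, the derivation E_{x,y} = Σ_{r ∈ Fin N} X_{(r,x)} · ∂/∂X_{(r,y)} annihilates Y(h_λ): E_{x,y}(Y(h_λ))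 = 0. (Y(h_λ) is a highest weight vector.) -/
open scoped BigOperators

/-- The top-left `k × k` generic minor `D_k = S(1,…,k)`: the determinant of the `k × k`
matrix whose `(r,c)` entry is the variable `X (r, c)`. -/
noncomputable def genericMinor (R : Type*) [CommRing R] {N m : ℕ} (k : ℕ)
    (hN : k ≤ N) (hm : k ≤ m) : MvPolynomial (Fin N × Fin m) R :=
  (Matrix.of fun r c : Fin k =>
    MvPolynomial.X (Fin.castLE hN r, Fin.castLE hm c)).det

theorem aux_leibniz_prod {R A ι : Type*} [CommRing R] [CommRing A] [Algebra R A] [DecidableEq ι]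
    (D : Derivation R A A) (s : Finset ι) (f : ι → A) :
    D (∏ i ∈ s, f i) = ∑ c ∈ s, ∏ i ∈ s, Function.update f c (D (f c)) i := by
  induction s using Finset.induction_on with
  | empty => simp
  | insert a s ha ih =>
    rw [Finset.prod_insert ha, Derivation.leibniz, ih, Finset.sum_insert ha,
      Finset.prod_insert ha, Function.update_self, smul_eq_mul, smul_eq_mul, Finset.mul_sum,
      add_comm]
    congr 1
    · rw [mul_comm]
      congr 1
      refine Finset.prod_congr rfl fun i hi => ?_
      rw [Function.update_of_ne (ne_of_mem_of_not_mem hi ha)]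
    · refine Finset.sum_congr rfl fun c hc => ?_
      rw [Finset.prod_insert ha, Function.update_of_ne (ne_of_mem_of_not_mem hc ha).symm]

theorem aux_det {R A : Type*} [CommRing R] [CommRing A] [Algebra R A] {n : ℕ}
    (D : Derivation R A A) (M : Matrix (Fin n) (Fin n) A) :
    D M.det = ∑ c, (M.updateCol c (fun r => D (M r c))).det := by
  simp only [Matrix.det_apply, Units.smul_def]
  rw [Finset.sum_comm, map_sum]
  refine Finset.sum_congr rfl fun σ _ => ?_
  rw [map_zsmul, aux_leibniz_prod, Finset.smul_sum]
  refine Finset.sum_congr rfl fun c _ => ?_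
  congr 1
  refine Finset.prod_congr rfl fun i _ => ?_
  by_cases h : i = c
  · subst h; simp
  · simp [h]

theorem aux_minor {R : Type*} [CommRing R] {N m : ℕ} (k : ℕ) (hN : k ≤ N) (hm : k ≤ m)
    (x y : Fin m) (hxy : x < y)
    (D : Derivation R (MvPolynomial (Fin N × Fin m) R) (MvPolynomial (Fin N × Fin m) R))
    (hD : ∀ r s, D (MvPolynomial.X (r, s)) = if s = y then MvPolynomial.X (r, x) else 0) :
    D (genericMinor R k hN hm) = 0 := by
  rw [genericMinor, aux_det]
  refine Finset.sum_eq_zero fun c _ => ?_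
  by_cases h : Fin.castLE hm c = y
  · have hy : (c : ℕ) = y := by rw [← h]; rfl
    have hx : (x : ℕ) < c := by rw [hy]; exact hxy
    have hne : (⟨x, hx.trans c.2⟩ : Fin k) ≠ c := fun e => by
      rw [← e] at hx; exact lt_irrefl _ hx
    refine Matrix.det_zero_of_column_eq hne fun r => ?_
    rw [Matrix.updateCol_ne hne, Matrix.updateCol_self]
    simp only [Matrix.of_apply, hD, h, if_true]
    rfl
  · refine Matrix.det_eq_zero_of_column_eq_zero c fun r => ?_
    rw [Matrix.updateCol_self]
    simp only [Matrix.of_apply, hD, h, if_false]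

/-- The Young operator `Y(h_λ)` of the highest-weight tableau of a diagram with column
lengths `k₁,…,k_p` (all at most `min(N,m)`) is annihilated by the raising derivations
`E_{x,y} = Σ_r X_{(r,x)} ∂/∂X_{(r,y)}` for `x < y`: it is a highest weight vector. -/
theorem stmt6 {R : Type*} [CommRing R] {N m p : ℕ} (k : Fin p → ℕ)
    (hN : ∀ j, k j ≤ N) (hm : ∀ j, k j ≤ m) (x y : Fin m) (hxy : x < y) :
    (∑ r : Fin N,
        MvPolynomial.X (r, x) *
          MvPolynomial.pderiv (r, y) (∏ j, genericMinor R (k j) (hN j) (hm j))) = 0 := by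
  classical
  let D : Derivation R (MvPolynomial (Fin N × Fin m) R) (MvPolynomial (Fin N × Fin m) R) :=
    ∑ r : Fin N, (MvPolynomial.X (r, x) : MvPolynomial (Fin N × Fin m) R) •
      MvPolynomial.pderiv (r, y)
  have hDa : ∀ f, D f = ∑ r : Fin N, MvPolynomial.X (r, x) * MvPolynomial.pderiv (r, y) f := by
    intro f
    simp only [D, ← Derivation.coeFnAddMonoidHom_apply, map_sum, Finset.sum_apply]
    rfl
  have hD : ∀ r s, D (MvPolynomial.X (r, s)) =
      if s = y then MvPolynomial.X (r, x) else 0 := by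
    intro r s
    rw [hDa]
    by_cases h : s = y
    · subst h
      rw [Finset.sum_eq_single r]
      · simp
      · intro b _ hb
        rw [MvPolynomial.pderiv_X_of_ne (by simpa using hb.symm), mul_zero]
      · simp
    · rw [if_neg h]
      refine Finset.sum_eq_zero fun b _ => ?_
      rw [MvPolynomial.pderiv_X_of_ne (by simp [h]), mul_zero]
  rw [← hDa, aux_leibniz_prod]
  refine Finset.sum_eq_zero fun c hc => Finset.prod_eq_zero hc ?_
  rw [Function.update_self]
  exact aux_minor _ _ _ x y hxy D hD
end

section
/- For all natural numbers a, b, n, the number of a×b matrices with entries in ℕ whose entries sum to n equals Σ_μ (number of semistandard Young tableaux of shape μ with entries in {1,…,a}) × (number of semistandard Young tableaux of shape μ with entries in {1,…,b}), where the sum runs over all Young diagrams μ with exactly n cells. (Combinatorial Cauchy identity via the Robinson–Schensted–Knuth correspondence.) -/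
open scoped BigOperators

namespace RSKaux

open YoungDiagram

/-- Young diagram from an eventually zero antitone function. -/
def ofFun (f : ℕ → ℕ) (N : ℕ) (hf : Antitone f) : YoungDiagram where
  cells := (Finset.range N ×ˢ Finset.range (f 0)).filter fun c => c.2 < f c.1
  isLowerSet := by
    rintro ⟨i2, j2⟩ ⟨i1, j1⟩ ⟨hi : i1 ≤ i2, hj : j1 ≤ j2⟩ h
    simp only [Finset.coe_filter, Finset.mem_product, Finset.mem_range, Set.mem_ofPred_eq] at h ⊢
    have := hf hi
    omega

theorem rowLen_ofFun (f : ℕ → ℕ) (N : ℕ) (hf : Antitone f) (hN : f N = 0) (i : ℕ) :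
    (ofFun f N hf).rowLen i = f i := by
  have h : ∀ j, j < (ofFun f N hf).rowLen i ↔ j < f i := by
    intro j
    rw [← mem_iff_lt_rowLen]
    rw [show (i, j) ∈ ofFun f N hf ↔ (i, j) ∈ (Finset.range N ×ˢ Finset.range (f 0)).filter
      fun c => c.2 < f c.1 from Iff.rfl]
    simp only [Finset.mem_filter, Finset.mem_product, Finset.mem_range]
    have h0 := hf (Nat.zero_le i)
    constructor
    · exact fun h => h.2
    · intro h
      refine ⟨⟨?_, by omega⟩, h⟩
      by_contra hc
      have := hf (not_lt.mp hc)
      omega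
  have h1 := h (f i)
  have h2 := h ((ofFun f N hf).rowLen i)
  omega

theorem ext_rowLen {μ ν : YoungDiagram} (h : ∀ i, μ.rowLen i = ν.rowLen i) : μ = ν := by
  ext ⟨i, j⟩
  rw [mem_cells, mem_cells, mem_iff_lt_rowLen, mem_iff_lt_rowLen, h]

theorem exists_zero (μ : YoungDiagram) : ∃ N, ∀ i, N ≤ i → μ.rowLen i = 0 := by
  refine ⟨μ.colLen 0, fun i hi => ?_⟩
  by_contra h
  have : (i, 0) ∈ μ := mem_iff_lt_rowLen.2 (Nat.pos_of_ne_zero h)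
  rw [mem_iff_lt_colLen] at this
  omega

theorem card_eq (μ : YoungDiagram) (N : ℕ) (hN : ∀ i, N ≤ i → μ.rowLen i = 0) :
    μ.card = ∑ i ∈ Finset.range N, μ.rowLen i := by
  rw [YoungDiagram.card, Finset.card_eq_sum_card_fiberwise (f := Prod.fst) (t := Finset.range N)]
  · exact Finset.sum_congr rfl fun i _ => (μ.rowLen_eq_card).symm
  · rintro ⟨i, j⟩ h
    simp only [Finset.mem_coe, mem_cells, mem_iff_lt_rowLen] at h
    simp only [Finset.coe_range, Set.mem_Iio]
    by_contra hc
    have := hN i (not_lt.mp hc)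
    omega

/-- `ν / lam` is a horizontal strip. -/
def HS (lam ν : YoungDiagram) : Prop :=
  ∀ i, ν.rowLen (i + 1) ≤ lam.rowLen i ∧ lam.rowLen i ≤ ν.rowLen i

/-- the local rule, upwards -/
def upF (l m k : ℕ → ℕ) (t : ℕ) : ℕ → ℕ
  | 0 => max (l 0) (m 0) + t
  | i + 1 => max (l (i + 1)) (m (i + 1)) + min (l i) (m i) - k i

/-- the local rule, downwards -/
def dnF (l m n : ℕ → ℕ) (i : ℕ) : ℕ :=
  max (l (i + 1)) (m (i + 1)) + min (l i) (m i) - n (i + 1)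

theorem exists_up (lam μ κ : YoungDiagram) (t : ℕ) (h1 : HS κ lam) (h2 : HS κ μ) :
    ∃ ν : YoungDiagram, ∀ i, ν.rowLen i = upF lam.rowLen μ.rowLen κ.rowLen t i := by
  obtain ⟨N, hN⟩ := exists_zero lam
  obtain ⟨M, hM⟩ := exists_zero μ
  refine ⟨ofFun (upF lam.rowLen μ.rowLen κ.rowLen t) (N + M + 1) ?_, rowLen_ofFun _ _ _ ?_⟩
  · apply antitone_nat_of_succ_le
    intro i
    have := h1 i; have := h2 i
    cases i with
    | zero => simp only [upF]; omega
    | succ i =>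
      have := h1 i; have := h2 i
      simp only [upF]; omega
  · have := hN (N + M) (by omega); have := hM (N + M) (by omega)
    have := hN (N + M + 1) (by omega); have := hM (N + M + 1) (by omega)
    simp only [upF]; omega

theorem exists_dn (lam μ ν : YoungDiagram) (h1 : HS lam ν) (h2 : HS μ ν) :
    ∃ κ : YoungDiagram, ∀ i, κ.rowLen i = dnF lam.rowLen μ.rowLen ν.rowLen i := by
  obtain ⟨N, hN⟩ := exists_zero lam
  obtain ⟨M, hM⟩ := exists_zero μ
  refine ⟨ofFun (dnF lam.rowLen μ.rowLen ν.rowLen) (N + M) ?_, rowLen_ofFun _ _ _ ?_⟩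
  · apply antitone_nat_of_succ_le
    intro i
    have := h1 i; have := h2 i
    have := h1 (i + 1); have := h2 (i + 1)
    have := h1 (i + 2); have := h2 (i + 2)
    simp only [dnF, add_assoc, Nat.reduceAdd] at *; omega
  · have := hN (N + M) (by omega); have := hM (N + M) (by omega)
    have := hN (N + M + 1) (by omega); have := hM (N + M + 1) (by omega)
    simp only [dnF]; omega

theorem up_HS {lam μ κ ν : YoungDiagram} {t : ℕ} (h1 : HS κ lam) (h2 : HS κ μ)
    (h : ∀ i, ν.rowLen i = upF lam.rowLen μ.rowLen κ.rowLen t i) : HS lam ν ∧ HS μ ν := by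
  refine ⟨fun i => ?_, fun i => ?_⟩ <;>
  · rw [h, h]
    have := h1 i; have := h2 i
    cases i with
    | zero => simp only [upF]; omega
    | succ i =>
      have := h1 i; have := h2 i
      simp only [upF]; omega

theorem dn_HS {lam μ κ ν : YoungDiagram} (h1 : HS lam ν) (h2 : HS μ ν)
    (h : ∀ i, κ.rowLen i = dnF lam.rowLen μ.rowLen ν.rowLen i) : HS κ lam ∧ HS κ μ := by
  refine ⟨fun i => ?_, fun i => ?_⟩ <;>
  · rw [h]
    have := h1 i; have := h2 i
    have := h1 (i + 1); have := h2 (i + 1)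
    simp only [dnF]; omega

theorem card_up {lam μ κ ν : YoungDiagram} {t : ℕ} (h1 : HS κ lam) (h2 : HS κ μ)
    (h : ∀ i, ν.rowLen i = upF lam.rowLen μ.rowLen κ.rowLen t i) :
    ν.card + κ.card = lam.card + μ.card + t := by
  obtain ⟨N, hN⟩ := exists_zero lam
  obtain ⟨M, hM⟩ := exists_zero μ
  have key : ∀ K, ∑ i ∈ Finset.range (K + 1), ν.rowLen i + ∑ i ∈ Finset.range K, κ.rowLen i
      = ∑ i ∈ Finset.range K, lam.rowLen i + ∑ i ∈ Finset.range K, μ.rowLen i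
        + max (lam.rowLen K) (μ.rowLen K) + t := by
    intro K
    induction K with
    | zero => simp [h, upF]
    | succ K ih =>
      rw [Finset.sum_range_succ _ (K + 1), Finset.sum_range_succ κ.rowLen,
        Finset.sum_range_succ lam.rowLen, Finset.sum_range_succ μ.rowLen, h (K + 1)]
      have := h1 K; have := h2 K
      simp only [upF]
      omega
  have hl := hN (N + M) (by omega)
  have hm := hM (N + M) (by omega)
  rw [card_eq ν (N + M + 1), card_eq κ (N + M), card_eq lam (N + M) fun i hi => hN i (by omega),
    card_eq μ (N + M) fun i hi => hM i (by omega), key]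
  · omega
  · intro i hi
    have := (h1 i).2
    have := hN i (by omega)
    omega
  · intro i hi
    obtain ⟨j, rfl⟩ : ∃ j, i = j + 1 := ⟨i - 1, by omega⟩
    rw [h]
    have := hN j (by omega); have := hM j (by omega)
    have := hN (j + 1) (by omega); have := hM (j + 1) (by omega)
    simp only [upF]; omega

/-- upward diagram -/
noncomputable def upD (lam μ : YoungDiagram) (p : {κ // HS κ lam ∧ HS κ μ} × ℕ) : YoungDiagram :=
  (exists_up lam μ p.1.1 p.2 p.1.2.1 p.1.2.2).choose

theorem upD_spec (lam μ : YoungDiagram) (p : {κ // HS κ lam ∧ HS κ μ} × ℕ) (i : ℕ) :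
    (upD lam μ p).rowLen i = upF lam.rowLen μ.rowLen p.1.1.rowLen p.2 i :=
  (exists_up lam μ p.1.1 p.2 p.1.2.1 p.1.2.2).choose_spec i

/-- downward diagram -/
noncomputable def dnD (lam μ : YoungDiagram) (ν : {ν // HS lam ν ∧ HS μ ν}) : YoungDiagram :=
  (exists_dn lam μ ν.1 ν.2.1 ν.2.2).choose

theorem dnD_spec (lam μ : YoungDiagram) (ν : {ν // HS lam ν ∧ HS μ ν}) (i : ℕ) :
    (dnD lam μ ν).rowLen i = dnF lam.rowLen μ.rowLen ν.1.rowLen i :=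
  (exists_dn lam μ ν.1 ν.2.1 ν.2.2).choose_spec i

/-- local rule as an equivalence -/
noncomputable def localEquiv (lam μ : YoungDiagram) :
    {ν // HS lam ν ∧ HS μ ν} ≃ {κ // HS κ lam ∧ HS κ μ} × ℕ where
  toFun ν := (⟨dnD lam μ ν, dn_HS ν.2.1 ν.2.2 (dnD_spec lam μ ν)⟩,
    ν.1.rowLen 0 - max (lam.rowLen 0) (μ.rowLen 0))
  invFun p := ⟨upD lam μ p, up_HS p.1.2.1 p.1.2.2 (upD_spec lam μ p)⟩
  left_inv := by
    rintro ⟨ν, h1, h2⟩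
    apply Subtype.ext
    apply ext_rowLen
    intro i
    simp only [upD_spec]
    cases i with
    | zero =>
      have := h1 0; have := h2 0
      simp only [upF]; omega
    | succ i =>
      simp only [upF, dnD_spec, dnF]
      have := h1 i; have := h2 i
      have := h1 (i + 1); have := h2 (i + 1)
      omega
  right_inv := by
    rintro ⟨⟨κ, h1, h2⟩, t⟩
    refine Prod.ext (Subtype.ext (ext_rowLen fun i => ?_)) ?_
    · simp only [dnD_spec, dnF, upD_spec, upF]
      have := h1 i; have := h2 i
      omega
    · simp only [upD_spec, upF]
      omega

theorem localEquiv_card (lam μ : YoungDiagram) (p : {κ // HS κ lam ∧ HS κ μ} × ℕ) :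
    ((localEquiv lam μ).symm p).1.card + p.1.1.card = lam.card + μ.card + p.2 :=
  card_up p.1.2.1 p.1.2.2 (upD_spec lam μ p)

open scoped ENNReal
open Classical in
/-- indicator -/
noncomputable def χ (κ lam : YoungDiagram) : ℝ≥0∞ := if HS κ lam then 1 else 0

open Classical in
theorem local_sum (lam μ : YoungDiagram) (w : ℕ → ℝ≥0∞) :
    ∑' ν : YoungDiagram, χ lam ν * (χ μ ν * w ν.card) =
      ∑' κ : YoungDiagram, χ κ lam * (χ κ μ * ∑' t, w (lam.card + μ.card + t - κ.card)) := by
  have e1 : ∀ g : YoungDiagram → ℝ≥0∞, ∑' ν : YoungDiagram, χ lam ν * (χ μ ν * g ν)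
      = ∑' ν : {ν // HS lam ν ∧ HS μ ν}, g ν := by
    intro g
    refine Eq.trans ?_ (tsum_subtype {ν | HS lam ν ∧ HS μ ν} g).symm
    refine tsum_congr fun ν => ?_
    by_cases h1 : HS lam ν <;> by_cases h2 : HS μ ν <;> simp [χ, h1, h2]
  have e2 : ∀ g : YoungDiagram → ℝ≥0∞, ∑' κ : YoungDiagram, χ κ lam * (χ κ μ * g κ)
      = ∑' κ : {κ // HS κ lam ∧ HS κ μ}, g κ := by
    intro g
    refine Eq.trans ?_ (tsum_subtype {ν | HS ν lam ∧ HS ν μ} g).symm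
    refine tsum_congr fun ν => ?_
    by_cases h1 : HS ν lam <;> by_cases h2 : HS ν μ <;> simp [χ, h1, h2]
  rw [e1 (fun ν => w ν.card), e2, ← (localEquiv lam μ).symm.tsum_eq, ENNReal.tsum_prod']
  refine tsum_congr fun κ => tsum_congr fun t => ?_
  have := localEquiv_card lam μ (κ, t)
  simp only at this
  congr 1
  omega

open Classical in
/-- number of chains -/
noncomputable def F : ℕ → YoungDiagram → ℝ≥0∞
  | 0, ν => if ν = ⊥ then 1 else 0
  | b + 1, ν => ∑' lam, χ lam ν * F b lam

theorem rowLen_bot (i : ℕ) : (⊥ : YoungDiagram).rowLen i = 0 := by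
  by_contra h
  exact notMem_bot _ (mem_iff_lt_rowLen.2 (Nat.pos_of_ne_zero h))

theorem HS_bot (lam : YoungDiagram) : HS lam ⊥ ↔ lam = ⊥ := by
  constructor
  · intro h
    apply ext_rowLen
    intro i
    have := (h i).2
    simp only [rowLen_bot] at *
    omega
  · rintro rfl i
    simp [rowLen_bot]

theorem tsum_cons (b : ℕ) {α : Type} (g : (Fin (b + 1) → α) → ℝ≥0∞) :
    ∑' v, g v = ∑' t : α, ∑' v : Fin b → α, g (Fin.cons t v) := by
  rw [← (Fin.consEquiv fun _ => α).tsum_eq, ENNReal.tsum_prod']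
  rfl

theorem F_up (b : ℕ) : ∀ (lam : YoungDiagram) (w : ℕ → ℝ≥0∞),
    ∑' ν : YoungDiagram, χ lam ν * (F b ν * w ν.card) =
      F b lam * ∑' v : Fin b → ℕ, w (lam.card + ∑ i, v i) := by
  induction b with
  | zero =>
    intro lam w
    rw [tsum_eq_single ⊥]
    · by_cases h : lam = ⊥
      · subst h
        simp [F, χ, (HS_bot ⊥).2 rfl]
      · simp [F, χ, mt (HS_bot lam).1 h, h]
    · intro ν hν
      simp [F, hν]
  | succ b ih =>
    intro lam w
    calc _ = ∑' ν : YoungDiagram, ∑' μ : YoungDiagram,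
          F b μ * (χ lam ν * (χ μ ν * w ν.card)) := by
          refine tsum_congr fun ν => ?_
          rw [F, ← ENNReal.tsum_mul_right, ← ENNReal.tsum_mul_left]
          exact tsum_congr fun μ => by ring
      _ = ∑' μ : YoungDiagram, F b μ * ∑' κ : YoungDiagram,
            χ κ lam * (χ κ μ * ∑' t, w (lam.card + μ.card + t - κ.card)) := by
          rw [ENNReal.tsum_comm]
          refine tsum_congr fun μ => ?_
          rw [ENNReal.tsum_mul_left, local_sum]
      _ = ∑' κ : YoungDiagram, χ κ lam * ∑' μ : YoungDiagram, χ κ μ * (F b μ *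
            (fun s => ∑' t, w (lam.card + s + t - κ.card)) μ.card) := by
          refine (tsum_congr fun μ => ENNReal.tsum_mul_left.symm).trans ?_
          rw [ENNReal.tsum_comm]
          refine tsum_congr fun κ => ?_
          rw [← ENNReal.tsum_mul_left]
          exact tsum_congr fun μ => by ring
      _ = _ := by
          rw [F, ← ENNReal.tsum_mul_right]
          refine tsum_congr fun κ => ?_
          rw [ih κ fun s => ∑' t, w (lam.card + s + t - κ.card), mul_assoc, tsum_cons, ENNReal.tsum_comm]
          congr 2
          refine tsum_congr fun t => tsum_congr fun v => ?_
          congr 1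
          simp only [Fin.sum_univ_succ, Fin.cons_zero, Fin.cons_succ]
          omega

theorem F_bot (b : ℕ) : F b ⊥ = 1 := by
  induction b with
  | zero => simp [F]
  | succ b ih =>
    rw [F, tsum_eq_single ⊥]
    · simp [χ, HS_bot, ih]
    · intro ν hν
      simp [χ, HS_bot, hν]

theorem main_sum (a b : ℕ) : ∀ w : ℕ → ℝ≥0∞,
    ∑' ν : YoungDiagram, F a ν * (F b ν * w ν.card) =
      ∑' M : Fin a → Fin b → ℕ, w (∑ r, ∑ c, M r c) := by
  induction a with
  | zero =>
    intro w
    rw [tsum_eq_single ⊥]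
    · simp [F, F_bot, YoungDiagram.card]
    · intro ν hν
      simp [F, hν]
  | succ a ih =>
    intro w
    calc _ = ∑' ν : YoungDiagram, ∑' lam : YoungDiagram,
          F a lam * (χ lam ν * (F b ν * w ν.card)) := by
          refine tsum_congr fun ν => ?_
          rw [F, ← ENNReal.tsum_mul_right]
          exact tsum_congr fun μ => by ring
      _ = ∑' lam : YoungDiagram, F a lam * (F b lam *
            (fun s => ∑' v : Fin b → ℕ, w (s + ∑ i, v i)) lam.card) := by
          rw [ENNReal.tsum_comm]
          refine tsum_congr fun μ => ?_
          rw [ENNReal.tsum_mul_left, F_up]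
      _ = _ := by
          rw [ih fun s => ∑' v : Fin b → ℕ, w (s + ∑ i, v i), tsum_cons, ENNReal.tsum_comm]
          refine tsum_congr fun t => tsum_congr fun v => ?_
          congr 1
          simp only [Fin.sum_univ_succ, Fin.cons_zero, Fin.cons_succ]
          omega

/-- bounded tableaux -/
abbrev SS (a : ℕ) (μ : YoungDiagram) : Type :=
  {T : SemistandardYoungTableau μ // ∀ i j, (i, j) ∈ μ → T.1 i j < a}

theorem HS.le {lam ν : YoungDiagram} (h : HS lam ν) {i j : ℕ} (hc : (i, j) ∈ lam) :
    (i, j) ∈ ν := by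
  rw [mem_iff_lt_rowLen] at *
  exact hc.trans_le (h i).2

theorem HS.up {lam ν : YoungDiagram} (h : HS lam ν) {i j : ℕ} (hc : (i + 1, j) ∈ ν) :
    (i, j) ∈ lam := by
  rw [mem_iff_lt_rowLen] at *
  exact hc.trans_le (h i).1

/-- the cells with entry `< a` -/
def cut {ν : YoungDiagram} (T : SemistandardYoungTableau ν) (a : ℕ) : YoungDiagram where
  cells := ν.cells.filter fun c => T c.1 c.2 < a
  isLowerSet := by
    rintro ⟨i2, j2⟩ ⟨i1, j1⟩ ⟨hi : i1 ≤ i2, hj : j1 ≤ j2⟩ h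
    simp only [Finset.coe_filter, mem_cells, Set.mem_ofPred_eq] at h ⊢
    have h1 := T.row_weak_of_le hj h.1
    have h3 := ν.up_left_mem le_rfl hj h.1
    have h2 := T.col_weak hi h3
    exact ⟨ν.up_left_mem hi hj h.1, by omega⟩

theorem mem_cut {ν : YoungDiagram} (T : SemistandardYoungTableau ν) (a i j : ℕ) :
    (i, j) ∈ cut T a ↔ (i, j) ∈ ν ∧ T i j < a := by
  rw [show (i, j) ∈ cut T a ↔ (i, j) ∈ ν.cells.filter fun c => T c.1 c.2 < a from Iff.rfl]
  simp

theorem cut_HS {ν : YoungDiagram} {a : ℕ} (T : SS (a + 1) ν) : HS (cut T.1 a) ν := by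
  have key1 : ∀ i j, j < ν.rowLen (i + 1) → j < (cut T.1 a).rowLen i := by
    intro i j h
    rw [← mem_iff_lt_rowLen] at h ⊢
    rw [mem_cut]
    refine ⟨ν.up_left_mem (by omega) le_rfl h, ?_⟩
    have h1 := T.1.col_strict (Nat.lt_succ_self i) h
    have h2 : T.1 (i + 1) j < a + 1 := T.2 _ _ h
    simp only [Nat.succ_eq_add_one] at h1
    omega
  have key2 : ∀ i j, j < (cut T.1 a).rowLen i → j < ν.rowLen i := by
    intro i j h
    rw [← mem_iff_lt_rowLen] at h ⊢
    exact ((mem_cut _ _ _ _).1 h).1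
  intro i
  exact ⟨le_of_not_gt fun h => lt_irrefl _ (key1 _ _ h),
    le_of_not_gt fun h => lt_irrefl _ (key2 _ _ h)⟩

/-- restriction -/
def restr {ν : YoungDiagram} (T : SemistandardYoungTableau ν) (a : ℕ) : SS a (cut T a) :=
  ⟨{ entry := fun i j => if (i, j) ∈ cut T a then T i j else 0
     row_weak' := by
      intro i j1 j2 h hc
      rw [if_pos hc, if_pos ((cut T a).up_left_mem le_rfl h.le hc)]
      exact T.row_weak h ((mem_cut _ _ _ _).1 hc).1
     col_strict' := by
      intro i1 i2 j h hc
      rw [if_pos hc, if_pos ((cut T a).up_left_mem h.le le_rfl hc)]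
      exact T.col_strict h ((mem_cut _ _ _ _).1 hc).1
     zeros' := fun h => if_neg h },
   fun i j h => by
    show (if (i, j) ∈ cut T a then T i j else 0) < a
    rw [if_pos h]
    exact ((mem_cut _ _ _ _).1 h).2⟩

/-- extension -/
def extend {lam ν : YoungDiagram} {a : ℕ} (h : HS lam ν) (T : SS a lam) : SS (a + 1) ν :=
  ⟨{ entry := fun i j => if (i, j) ∈ lam then T.1 i j else if (i, j) ∈ ν then a else 0
     row_weak' := by
      intro i j1 j2 hj hc
      by_cases h2 : (i, j2) ∈ lam
      · rw [if_pos h2, if_pos (lam.up_left_mem le_rfl hj.le h2)]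
        exact T.1.row_weak hj h2
      · rw [if_neg h2, if_pos hc]
        split_ifs with h3
        · exact (T.2 _ _ h3).le
        · exact le_rfl
        · exact Nat.zero_le _
     col_strict' := by
      intro i1 i2 j hi hc
      have h1 : (i1, j) ∈ lam := h.up (ν.up_left_mem hi le_rfl hc)
      rw [if_pos h1]
      by_cases h2 : (i2, j) ∈ lam
      · rw [if_pos h2]
        exact T.1.col_strict hi h2
      · rw [if_neg h2, if_pos hc]
        exact T.2 _ _ h1
     zeros' := by
      intro i j hn
      rw [if_neg fun hc => hn (h.le hc), if_neg hn] },
   fun i j hc => by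
    show (if (i, j) ∈ lam then T.1 i j else if (i, j) ∈ ν then a else 0) < a + 1
    split_ifs with h3
    · exact (T.2 _ _ h3).trans (Nat.lt_succ_self a)
    · exact Nat.lt_succ_self a⟩

theorem extend_apply {lam ν : YoungDiagram} {a : ℕ} (h : HS lam ν) (T : SS a lam) (i j : ℕ) :
    (extend h T).1 i j = if (i, j) ∈ lam then T.1 i j else if (i, j) ∈ ν then a else 0 := rfl

theorem restr_apply {ν : YoungDiagram} (T : SemistandardYoungTableau ν) (a i j : ℕ) :
    (restr T a).1 i j = if (i, j) ∈ cut T a then T i j else 0 := rfl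

theorem sigma_ext {ν : YoungDiagram} {a : ℕ} (x y : Σ lam : {lam // HS lam ν}, SS a lam.1)
    (h : x.1.1 = y.1.1) (h2 : ∀ i j, x.2.1 i j = y.2.1 i j) : x = y := by
  obtain ⟨⟨l, hl⟩, T⟩ := x
  obtain ⟨⟨m, hm⟩, S⟩ := y
  obtain rfl : l = m := h
  congr 1
  exact Subtype.ext (SemistandardYoungTableau.ext h2)

/-- decomposition -/
def decomp (a : ℕ) (ν : YoungDiagram) :
    SS (a + 1) ν ≃ Σ lam : {lam // HS lam ν}, SS a lam.1 where
  toFun T := ⟨⟨cut T.1 a, cut_HS T⟩, restr T.1 a⟩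
  invFun p := extend p.1.2 p.2
  left_inv T := by
    apply Subtype.ext
    ext i j
    rw [extend_apply, restr_apply]
    have h0 := mem_cut T.1 a i j
    split_ifs with h1 h2
    · rfl
    · have h3 : T.1 i j < a + 1 := T.2 _ _ h2
      have h4 : ¬ T.1 i j < a := fun h => h1 (h0.2 ⟨h2, h⟩)
      omega
    · exact (T.1.zeros h2).symm
  right_inv := by
    rintro ⟨⟨lam, h⟩, T⟩
    have hcut : cut (extend h T).1 a = lam := by
      ext ⟨i, j⟩
      rw [mem_cells, mem_cells, mem_cut, extend_apply]
      by_cases h1 : (i, j) ∈ lam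
      · simp only [h1, if_true, iff_true]
        exact ⟨h.le h1, T.2 _ _ h1⟩
      · simp only [h1, if_false, iff_false]
        rintro ⟨h2, h3⟩
        rw [if_pos h2] at h3
        exact lt_irrefl _ h3
    refine sigma_ext _ _ hcut fun i j => ?_
    show (restr (extend h T).1 a).1 i j = T.1 i j
    rw [restr_apply, hcut, extend_apply]
    by_cases h1 : (i, j) ∈ lam
    · simp [h1]
    · simp [h1, T.1.zeros h1]

instance finHS (ν : YoungDiagram) : Finite {lam // HS lam ν} := by
  refine Finite.of_injective (β := ν.cells.powerset)
    (fun l => ⟨l.1.cells, Finset.mem_powerset.2 fun c hc => l.2.le hc⟩) ?_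
  intro l m h
  simp only [Subtype.mk.injEq] at h
  exact Subtype.ext (YoungDiagram.ext h)

theorem F_eq (a : ℕ) : ∀ ν, Finite (SS a ν) ∧ F a ν = (Nat.card (SS a ν) : ℝ≥0∞) := by
  induction a with
  | zero =>
    intro ν
    by_cases h : ν = ⊥
    · subst h
      have : Unique (SS 0 ⊥) :=
        { default := ⟨default, fun i j h => absurd h (notMem_bot _)⟩
          uniq := fun T => Subtype.ext (SemistandardYoungTableau.ext fun i j => by
            rw [SemistandardYoungTableau.zeros _ (notMem_bot _),
              SemistandardYoungTableau.zeros _ (notMem_bot _)]) }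
      exact ⟨inferInstance, by simp [F]⟩
    · have : IsEmpty (SS 0 ν) := by
        refine ⟨fun T => h ?_⟩
        ext ⟨i, j⟩
        simp only [mem_cells, notMem_bot, iff_false]
        exact fun hc => absurd (T.2 i j hc) (Nat.not_lt_zero _)
      exact ⟨inferInstance, by simp [F, h]⟩
  | succ a ih =>
    intro ν
    have := fun ν => (ih ν).1
    have := Fintype.ofFinite {lam // HS lam ν}
    refine ⟨Finite.of_equiv _ (decomp a ν).symm, ?_⟩
    rw [Nat.card_congr (decomp a ν), Nat.card_sigma, F]
    push_cast
    rw [← tsum_fintype (L := .unconditional _)]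
    refine Eq.trans ?_ (tsum_congr fun l : {lam // HS lam ν} => (ih l.1).2)
    refine Eq.trans ?_ (tsum_subtype {lam | HS lam ν} (F a)).symm
    refine tsum_congr fun l => ?_
    by_cases h1 : HS l ν <;> simp [χ, h1]

theorem finM (a b n : ℕ) :
    Finite {M : Matrix (Fin a) (Fin b) ℕ // (∑ r, ∑ c, M r c) = n} := by
  refine Finite.of_injective (β := Fin a → Fin b → Fin (n + 1)) (fun M r c => ⟨M.1 r c, ?_⟩) ?_
  · have h1 : M.1 r c ≤ ∑ c, M.1 r c :=
      Finset.single_le_sum (f := fun c => M.1 r c) (fun _ _ => Nat.zero_le _) (Finset.mem_univ c)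
    have h2 : ∑ c, M.1 r c ≤ ∑ r, ∑ c, M.1 r c :=
      Finset.single_le_sum (f := fun r => ∑ c, M.1 r c) (fun _ _ => Nat.zero_le _)
        (Finset.mem_univ r)
    have := M.2
    omega
  · intro M N h
    apply Subtype.ext
    ext r c
    have := congrFun (congrFun h r) c
    simpa using this

end RSKaux

/-- Combinatorial Cauchy identity via the Robinson–Schensted–Knuth correspondence:
the number of `a × b` matrices of naturals with entry sum `n` equals the sum, over all
Young diagrams `μ` with `n` cells, of the product of the number of semistandard Young
tableaux of shape `μ` with entries in `{1,…,a}` (0-indexed: entries `< a`) and the number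
with entries in `{1,…,b}`. -/
theorem stmt8 (a b n : ℕ) (s : Finset YoungDiagram)
    (hs : ∀ μ : YoungDiagram, μ ∈ s ↔ μ.card = n) :
    Nat.card {M : Matrix (Fin a) (Fin b) ℕ // (∑ r, ∑ c, M r c) = n} =
      ∑ μ ∈ s,
        Nat.card {T : SemistandardYoungTableau μ // ∀ i j, (i, j) ∈ μ → T.1 i j < a} *
          Nat.card {T : SemistandardYoungTableau μ // ∀ i j, (i, j) ∈ μ → T.1 i j < b} := by
  classical
  have key := RSKaux.main_sum a b fun k => if k = n then 1 else 0
  have hf := RSKaux.finM a b n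
  have := Fintype.ofFinite {M : Matrix (Fin a) (Fin b) ℕ // (∑ r, ∑ c, M r c) = n}
  have hR : (∑' M : Fin a → Fin b → ℕ,
      if (∑ r, ∑ c, M r c) = n then (1 : ENNReal) else 0) =
      (Nat.card {M : Matrix (Fin a) (Fin b) ℕ // (∑ r, ∑ c, M r c) = n} : ENNReal) := by
    have h1 := tsum_subtype {M : Matrix (Fin a) (Fin b) ℕ | (∑ r, ∑ c, M r c) = n}
      (fun _ => (1 : ENNReal))
    refine Eq.trans ?_ (h1.symm.trans ?_)
    · refine tsum_congr (β := Matrix (Fin a) (Fin b) ℕ) fun M => ?_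
      refine Eq.trans ?_ (Set.indicator_apply _ _ _).symm
      by_cases h : (∑ r, ∑ c, M r c) = n
      · exact (if_pos h).trans (if_pos h).symm
      · exact (if_neg h).trans (if_neg h).symm
    · refine (tsum_fintype (L := .unconditional _)
        (fun _ : {M : Matrix (Fin a) (Fin b) ℕ // (∑ r, ∑ c, M r c) = n} => (1 : ENNReal))).trans ?_
      simp [Nat.card_eq_fintype_card]
  rw [hR, tsum_eq_sum (s := s)] at key
  · have := key.symm
    rw [← Nat.cast_inj (R := ENNReal), this]
    push_cast
    refine Finset.sum_congr rfl fun μ hμ => ?_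
    rw [if_pos ((hs μ).1 hμ), mul_one, (RSKaux.F_eq a μ).2, (RSKaux.F_eq b μ).2]
  · intro μ hμ
    rw [hs] at hμ
    simp [hμ]
end

section
/- Let m, n be natural numbers and K a field of characteristic zero (e.g. ℝ or ℂ). Let P be an m×m matrix over K, i : Fin n → Fin m a list of input sites, and g : Fin m → ℕ an occupation list with Σ_j g_j = n. Then Σ_f ∏_{k=1}^n P_{f(k), i(k)} = (1/g!) · Perm(P(ζ(g)|i)), where the sum is over all functions f : Fin n → Fin m such that each j ∈ Fin m is attained exactly g_j times, g! = ∏_j (g_j)!, ζ(g) is the list containing each mode j repeated g_j times (in increasing order), and P(ζ(g)|i) is the n×n matrix with (x,k) entry P_{ζ(g)_x, i(k)}. (Distinguishable particle model: when P_{j,i} = |U_{j,i}|² is the single-particle transition probability, the left side is the probability that n independent distinguishable particles starting in sites i arrive in the occupations g, and it equals (1/g!)Perm(|U|²(ζ(g)|i)).) -/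
open scoped BigOperators

/-- Distinguishable particle model: the probability that `n` independent distinguishable
particles with single-particle transition matrix `P`, starting in sites `i`, arrive in the
occupations `g` equals `(1/g!) · Perm(P(ζ(g)|i))`, where `z = ζ(g)` is the weakly
increasing list containing each mode `j` repeated `g j` times. -/
theorem stmt10 {K : Type*} [Field K] [CharZero K] {m n : ℕ}
    (P : Matrix (Fin m) (Fin m) K) (i : Fin n → Fin m) (g : Fin m → ℕ)
    (hg : ∑ j, g j = n) (z : Fin n → Fin m) (hz : Monotone z)
    (hzc : ∀ j, (Finset.univ.filter fun x => z x = j).card = g j) :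
    ∑ f ∈ Finset.univ.filter
        (fun f : Fin n → Fin m =>
          ∀ j, (Finset.univ.filter fun x => f x = j).card = g j),
      ∏ x, P (f x) (i x) =
      ((∏ j, (g j).factorial : ℕ) : K)⁻¹ *
        (Matrix.of fun x y : Fin n => P (z x) (i y)).permanent := by
  have hne : ((∏ j, (g j).factorial : ℕ) : K) ≠ 0 := by
    exact_mod_cast Finset.prod_ne_zero_iff.2 fun j _ => Nat.factorial_ne_zero _
  rw [eq_inv_mul_iff_mul_eq₀ hne]
  have hmap : ∀ σ ∈ (Finset.univ : Finset (Equiv.Perm (Fin n))),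
      z ∘ σ ∈ Finset.univ.filter (fun f : Fin n → Fin m =>
          ∀ j, (Finset.univ.filter fun x => f x = j).card = g j) := by
    intro σ _
    simp only [Finset.mem_filter, Finset.mem_univ, true_and]
    intro j
    rw [← hzc j]
    exact Finset.card_equiv σ (by simp)
  unfold Matrix.permanent
  rw [← Finset.sum_fiberwise_of_maps_to hmap, Finset.mul_sum]
  refine Finset.sum_congr rfl fun f hf => ?_
  simp only [Finset.mem_filter, Finset.mem_univ, true_and] at hf
  have hc : (Finset.univ.filter fun σ : Equiv.Perm (Fin n) => z ∘ σ = f).card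
      = ∏ j, (g j).factorial := by
    have e : ∀ j, Nonempty ({x // f x = j} ≃ {x // z x = j}) := fun j => by
      rw [← Fintype.card_eq, Fintype.card_subtype, Fintype.card_subtype, hf, hzc]
    let σ₀ : Equiv.Perm (Fin n) := Equiv.ofFiberEquiv fun j => (e j).some
    have h0 : z ∘ σ₀ = f := funext fun x => Equiv.ofFiberEquiv_map _ x
    have h1 := DomMulAct.stabilizer_card z
    simp only [Fintype.card_subtype, hzc] at h1
    rw [← h1]
    refine Finset.card_equiv (Equiv.mulRight σ₀⁻¹) fun σ => ?_
    simp only [Finset.mem_filter, Finset.mem_univ, true_and, Equiv.coe_mulRight]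
    rw [← h0]
    constructor
    · intro h
      funext x
      have := congrFun h (σ₀⁻¹ x)
      simpa using this
    · intro h
      funext x
      have := congrFun h (σ₀ x)
      simpa using this
  rw [Finset.sum_congr rfl (g := fun _ => ∏ x, P (f x) (i x)), Finset.sum_const, hc, nsmul_eq_mul]
  intro σ hσ
  simp only [Finset.mem_filter, Finset.mem_univ, true_and] at hσ
  subst hσ
  rfl
end

section
/- Let n ≥ 1, π a permutation of Fin n, and x a real number with 0 ≤ x < 1. Then the sum Σ x^(Σ_{y} j(y)) over all functions j : Fin n → ℕ satisfying j ∘ π = j converges, and equals ∏_c (1 − x^{|c|})^{−1}, where the product runs over the orbits c of π acting on Fin n (equivalently, over the cycles of π, with fixed points counted as cycles of length 1) and |c| denotes the cardinality of the orbit. In the paper's notation, Z(x)^n · k_x(π) = ∏_{c∈C(π)} Z(x^{ℓ(c)}) with Z(x) = 1/(1−x). -/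
open scoped BigOperators

/-- The finite set of orbits (cycles, with fixed points as singleton orbits) of a
permutation `π` of `Fin n`. -/
def orbitsFinset {n : ℕ} (π : Equiv.Perm (Fin n)) : Finset (Finset (Fin n)) :=
  Finset.univ.image fun y => Finset.univ.filter fun z => π.SameCycle y z

theorem aux_fin (x : ℝ) (h0 : 0 ≤ x) (h1 : x < 1) : ∀ (m : ℕ) (a : Fin m → ℕ), (∀ i, a i ≠ 0) →
    HasSum (fun f : Fin m → ℕ => x ^ (∑ i, a i * f i)) (∏ i, (1 - x ^ a i)⁻¹) := by
  intro m
  induction m with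
  | zero =>
    intro a _
    simpa using hasSum_unique (fun f : Fin 0 → ℕ => x ^ (∑ i, a i * f i))
  | succ m ih =>
    intro a ha
    have hA := hasSum_geometric_of_lt_one (pow_nonneg h0 (a 0)) (pow_lt_one₀ h0 h1 (ha 0))
    have hB := ih (fun i => a i.succ) (fun i => ha _)
    have hs := hA.summable.mul_of_nonneg hB.summable (fun k => by positivity)
      (fun k => by positivity)
    have h := hA.mul hB hs
    rw [Fin.prod_univ_succ]
    rw [← (Fin.consEquiv (fun _ : Fin (m+1) => ℕ)).hasSum_iff]
    refine Eq.mpr (congrArg (fun g => HasSum g _) (funext fun p => ?_)) h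
    simp [Fin.consEquiv, Fin.sum_univ_succ, pow_add, pow_mul]

theorem aux_ft (x : ℝ) (h0 : 0 ≤ x) (h1 : x < 1) {ι : Type} [Fintype ι] (a : ι → ℕ)
    (ha : ∀ i, a i ≠ 0) :
    HasSum (fun f : ι → ℕ => x ^ (∑ i, a i * f i)) (∏ i, (1 - x ^ a i)⁻¹) := by
  let e := Fintype.equivFin ι
  have h := aux_fin x h0 h1 _ (fun i => a (e.symm i)) (fun i => ha _)
  rw [e.symm.prod_comp (fun i => (1 - x ^ a i)⁻¹)] at h
  rw [← (e.arrowCongr (Equiv.refl ℕ)).symm.hasSum_iff]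
  convert h using 2 with f
  simp only [Function.comp]
  rw [← e.symm.sum_comp]
  simp [Equiv.arrowCongr]


/-- For `0 ≤ x < 1`, the sum `Σ x^(Σ_y j(y))` over all `π`-invariant functions
`j : Fin n → ℕ` converges and equals `∏_c (1 − x^{|c|})⁻¹`, the product running over the
orbits of `π` (fixed points counted as orbits of size 1). -/
theorem stmt11 {n : ℕ} (hn : 1 ≤ n) (π : Equiv.Perm (Fin n)) (x : ℝ)
    (h0 : 0 ≤ x) (h1 : x < 1) :
    HasSum (fun j : {j : Fin n → ℕ // j ∘ ⇑π = j} => x ^ (∑ y, j.1 y))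
      (∏ c ∈ orbitsFinset π, (1 - x ^ c.card)⁻¹) := by
  let orb : Fin n → orbitsFinset π := fun y =>
    ⟨Finset.univ.filter fun z => π.SameCycle y z, Finset.mem_image_of_mem _ (Finset.mem_univ y)⟩
  have horb : ∀ y z, orb y = orb z ↔ π.SameCycle y z := by
    intro y z
    constructor
    · intro h
      have h2 : z ∈ (orb y).1 := by
        rw [h]
        simp [orb, Equiv.Perm.SameCycle.refl]
      simpa [orb] using h2
    · intro h
      apply Subtype.ext
      ext w
      simp only [orb, Finset.mem_filter, Finset.mem_univ, true_and]
      exact ⟨fun h' => h.symm.trans h', fun h' => h.trans h'⟩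
  have hsurj : Function.Surjective orb := by
    rintro ⟨c, hc⟩
    obtain ⟨y, -, hy⟩ := Finset.mem_image.1 hc
    exact ⟨y, Subtype.ext hy⟩
  have hfib : ∀ c : orbitsFinset π, (Finset.univ.filter fun y => orb y = c) = c.1 := by
    intro c
    obtain ⟨y, rfl⟩ := hsurj c
    ext z
    rw [Finset.mem_filter, horb]
    simp [orb, Equiv.Perm.sameCycle_comm]
  have hinv : ∀ j : Fin n → ℕ, j ∘ ⇑π = j → ∀ y z, π.SameCycle y z → j y = j z := by
    intro j hj y z hyz
    obtain ⟨k, -, hk⟩ := hyz.exists_pow_eq'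
    rw [← hk]
    clear hk
    induction k with
    | zero => simp
    | succ k ih =>
      rw [pow_succ', Equiv.Perm.mul_apply, ih]
      exact (congrFun hj _).symm
  let F : (orbitsFinset π → ℕ) → {j : Fin n → ℕ // j ∘ ⇑π = j} := fun f =>
    ⟨fun y => f (orb y), by
      funext y
      have : orb (π y) = orb y := (horb _ _).2 (by simp [Equiv.Perm.SameCycle.refl])
      simp [this]⟩
  have hF : Function.Bijective F := by
    constructor
    · intro f g h
      funext c
      obtain ⟨y, rfl⟩ := hsurj c
      exact congrFun (congrArg Subtype.val h) y
    · rintro ⟨j, hj⟩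
      refine ⟨fun c => j (Function.surjInv hsurj c), Subtype.ext (funext fun y => ?_)⟩
      exact hinv j hj _ _ ((horb _ _).1 (Function.surjInv_eq hsurj (orb y)))
  have hpos : ∀ c : orbitsFinset π, c.1.card ≠ 0 := by
    intro c
    obtain ⟨y, hy⟩ := hsurj c
    rw [← hfib c]
    exact Finset.card_ne_zero_of_mem (a := y) (by simp [hy])
  have h := aux_ft x h0 h1 (fun c : orbitsFinset π => c.1.card) hpos
  rw [Finset.prod_coe_sort (orbitsFinset π) (fun c => (1 - x ^ c.card)⁻¹)] at h
  rw [← (Equiv.ofBijective F hF).hasSum_iff]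
  convert h using 2 with f
  simp only [Function.comp, Equiv.ofBijective_apply, F]
  congr 1
  rw [← Finset.sum_fiberwise (s := Finset.univ) (g := orb)]
  refine Finset.sum_congr rfl fun c _ => ?_
  rw [Finset.sum_congr rfl (g := fun _ => f c)
    (fun y hy => by rw [(Finset.mem_filter.1 hy).2]), hfib]
  simp
end

section
/- Fix n ≥ 1. The following two statements are equivalent. (Lieb's permanental dominance for immanants) For every positive semidefinite n×n complex matrix M and every irreducible complex character χ of the symmetric group S_n, the normalized immanant (1/χ(1)) Σ_{σ∈S_n} χ(σ) ∏_{x=1}^n M_{x,σ(x)} is at most Perm(M) (both quantities are real for positive semidefinite M). (Weak generalized bunching) For every m ≥ n, every m×m unitary matrix U, every subset S of the output sites {1,…,m}, every injective list of input sites i : Fin n → {1,…,m}, and every irreducible complex character χ of S_n, the normalized immanant of the Gram matrix G with entries G_{x,y} = Σ_{s∈S} conj(U_{s,i(x)}) · U_{s,i(y)} is at most Perm(G). (Equivalently, the generalized bunching probability b(S|U,i,φ_λ) of the permutation-invariant single-occupancy state supported on the λ irrep never exceeds b(S|U,i,φ_{(n)}) for the fully bosonic state.) -/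
open scoped BigOperators ComplexOrder

/-- `χ` is an irreducible complex character of the symmetric group `S_n`. -/
def IsIrreducibleCharacter (n : ℕ) (χ : Equiv.Perm (Fin n) → ℂ) : Prop :=
  ∃ V : FDRep ℂ (Equiv.Perm (Fin n)), CategoryTheory.Simple V ∧ χ = FDRep.character V

/-- The normalized generalized matrix function (normalized immanant) of a matrix `M`
associated to the character `χ` of `S_n`: `(1/χ(e)) Σ_σ χ(σ) ∏_x M_{x,σ(x)}`. -/
noncomputable def normImmanant {n : ℕ} (χ : Equiv.Perm (Fin n) → ℂ)
    (M : Matrix (Fin n) (Fin n) ℂ) : ℂ :=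
  (χ 1)⁻¹ * ∑ σ : Equiv.Perm (Fin n), χ σ * ∏ x, M x (σ x)

open scoped Matrix
theorem aux_dilation (n : ℕ) (M : Matrix (Fin n) (Fin n) ℂ) (hM : M.PosSemidef) :
    ∃ c : ℝ, 0 < c ∧ ∃ W : Matrix (Fin n ⊕ Fin n) (Fin n ⊕ Fin n) ℂ,
      star W * W = 1 ∧
      ∀ x y, ∑ s : Fin n, star (W (Sum.inl s) (Sum.inl x)) * W (Sum.inl s) (Sum.inl y)
        = (c : ℂ) * M x y := by
  classical
  set l := hM.isHermitian.eigenvalues with hl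
  have hl0 : ∀ j, 0 ≤ l j := hM.eigenvalues_nonneg
  set V : Matrix (Fin n) (Fin n) ℂ := hM.isHermitian.eigenvectorUnitary.1 with hV
  have hVV : V * Vᴴ = 1 := by
    have := (Matrix.mem_unitaryGroup_iff).1 hM.isHermitian.eigenvectorUnitary.2
    simpa [Matrix.star_eq_conjTranspose] using this
  have hspec : M = V * Matrix.diagonal (fun j => (l j : ℂ)) * Vᴴ := by
    have := hM.isHermitian.spectral_theorem
    rw [Unitary.conjStarAlgAut_apply] at this
    simpa [Matrix.star_eq_conjTranspose, Function.comp_def] using this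
  have hs0 : 0 ≤ ∑ j, l j := Finset.sum_nonneg fun j _ => hl0 j
  set c : ℝ := (1 + ∑ j, l j)⁻¹ with hc
  have hcpos : 0 < c := by positivity
  have hcl : ∀ j, c * l j ≤ 1 := by
    intro j
    have : l j ≤ ∑ j, l j := Finset.single_le_sum (fun j _ => hl0 j) (Finset.mem_univ j)
    rw [hc, inv_mul_le_iff₀ (by positivity)]
    linarith
  set C : Matrix (Fin n) (Fin n) ℂ := Matrix.diagonal fun j => ((√(c * l j) : ℝ) : ℂ) with hC
  set S : Matrix (Fin n) (Fin n) ℂ := Matrix.diagonal fun j => ((√(1 - c * l j) : ℝ) : ℂ) with hS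
  have hCH : Cᴴ = C := by
    rw [hC, Matrix.diagonal_conjTranspose]; congr 1; ext j; simp
  have hSH : Sᴴ = S := by
    rw [hS, Matrix.diagonal_conjTranspose]; congr 1; ext j; simp
  have hCS : C * S = S * C := by
    rw [hC, hS, Matrix.diagonal_mul_diagonal, Matrix.diagonal_mul_diagonal]
    congr 1; ext j; ring
  have hCC : C * C = (c : ℂ) • Matrix.diagonal (fun j => (l j : ℂ)) := by
    rw [hC, Matrix.diagonal_mul_diagonal, ← Matrix.diagonal_smul]
    congr 1; ext j
    rw [← Complex.ofReal_mul, Real.mul_self_sqrt (mul_nonneg hcpos.le (hl0 j))]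
    simp
  have hsum : C * C + S * S = 1 := by
    rw [hC, hS, Matrix.diagonal_mul_diagonal, Matrix.diagonal_mul_diagonal,
      Matrix.diagonal_add, ← Matrix.diagonal_one]
    congr 1; ext j
    rw [← Complex.ofReal_mul, Real.mul_self_sqrt (mul_nonneg hcpos.le (hl0 j)),
      ← Complex.ofReal_mul, Real.mul_self_sqrt (by linarith [hcl j])]
    simp
  have hA : (C * Vᴴ)ᴴ * (C * Vᴴ) = (c : ℂ) • M := by
    rw [Matrix.conjTranspose_mul, Matrix.conjTranspose_conjTranspose, hCH]
    calc V * C * (C * Vᴴ) = V * (C * C) * Vᴴ := by simp only [Matrix.mul_assoc]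
      _ = _ := by rw [hCC, hspec]; simp
  refine ⟨c, hcpos, Matrix.fromBlocks (C * Vᴴ) (-S) (S * Vᴴ) C, ?_, ?_⟩
  · rw [Matrix.star_eq_conjTranspose, Matrix.fromBlocks_conjTranspose,
      Matrix.fromBlocks_multiply, ← Matrix.fromBlocks_one]
    simp only [Matrix.conjTranspose_mul, Matrix.conjTranspose_conjTranspose, hCH, hSH,
      Matrix.conjTranspose_neg]
    congr 1
    · calc V * C * (C * Vᴴ) + V * S * (S * Vᴴ) = V * (C * C + S * S) * Vᴴ := by
            simp only [Matrix.mul_assoc, Matrix.mul_add, Matrix.add_mul]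
        _ = 1 := by rw [hsum, Matrix.mul_one, hVV]
    · calc V * C * -S + V * S * C = V * (S * C - C * S) := by
            simp only [Matrix.mul_assoc, Matrix.mul_sub, Matrix.mul_neg]; abel
        _ = 0 := by rw [hCS]; simp
    · calc -S * (C * Vᴴ) + C * (S * Vᴴ) = (C * S - S * C) * Vᴴ := by
            simp only [Matrix.mul_assoc, Matrix.sub_mul, Matrix.neg_mul]; abel
        _ = 0 := by rw [hCS]; simp
    · rw [← hsum]; simp [add_comm]
  · intro x y
    have := congrFun (congrFun hA x) y
    rw [Matrix.mul_apply] at this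
    simpa [Matrix.conjTranspose_apply] using this

theorem aux_normImmanant_smul {n : ℕ} (χ : Equiv.Perm (Fin n) → ℂ) (c : ℂ)
    (M : Matrix (Fin n) (Fin n) ℂ) : normImmanant χ (c • M) = c ^ n * normImmanant χ M := by
  simp only [normImmanant, Matrix.smul_apply, smul_eq_mul, Finset.prod_mul_distrib,
    Finset.prod_const, Finset.card_univ, Fintype.card_fin, Finset.mul_sum]
  refine Finset.sum_congr rfl fun σ _ => ?_
  ring

/-- Lieb's permanental dominance conjecture for immanants is equivalent to the weak
generalized bunching conjecture: for every `m ≥ n`, unitary `U`, subset `S` of output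
sites and injective list `i` of input sites, the normalized immanants of the Gram matrix
`G_{x,y} = Σ_{s∈S} conj(U_{s,i(x)}) U_{s,i(y)}` are dominated by its permanent. -/
theorem stmt14 (n : ℕ) (hn : 1 ≤ n) :
    (∀ M : Matrix (Fin n) (Fin n) ℂ, M.PosSemidef →
        ∀ χ : Equiv.Perm (Fin n) → ℂ, IsIrreducibleCharacter n χ →
          normImmanant χ M ≤ M.permanent) ↔
      (∀ m : ℕ, n ≤ m → ∀ U : Matrix (Fin m) (Fin m) ℂ,
          U ∈ Matrix.unitaryGroup (Fin m) ℂ →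
          ∀ S : Finset (Fin m), ∀ i : Fin n → Fin m, Function.Injective i →
            ∀ χ : Equiv.Perm (Fin n) → ℂ, IsIrreducibleCharacter n χ →
              normImmanant χ
                  (Matrix.of fun x y : Fin n => ∑ s ∈ S, star (U s (i x)) * U s (i y)) ≤
                (Matrix.of fun x y : Fin n =>
                  ∑ s ∈ S, star (U s (i x)) * U s (i y)).permanent) := by
  constructor
  · intro h m _ U _ S i _ χ hχ
    refine h _ ?_ χ hχ
    have : (Matrix.of fun x y : Fin n => ∑ s ∈ S, star (U s (i x)) * U s (i y)) =
        (Matrix.of fun (s : S) (x : Fin n) => U s (i x))ᴴ *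
          (Matrix.of fun (s : S) (x : Fin n) => U s (i x)) := by
      ext x y
      simp only [Matrix.of_apply, Matrix.mul_apply, Matrix.conjTranspose_apply]
      exact (Finset.sum_coe_sort S fun s => star (U s (i x)) * U s (i y)).symm
    rw [this]
    exact Matrix.posSemidef_conjTranspose_mul_self _
  · intro h M hM χ hχ
    obtain ⟨c, hc, W, hW, hG⟩ := aux_dilation n M hM
    have key := h (n + n) (by omega) (Matrix.reindex finSumFinEquiv finSumFinEquiv W)
      (by
        rw [Matrix.mem_unitaryGroup_iff', Matrix.star_eq_conjTranspose,
          Matrix.conjTranspose_reindex]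
        simp only [Matrix.reindex_apply, Matrix.submatrix_mul_equiv]
        rw [← Matrix.star_eq_conjTranspose, hW, Matrix.submatrix_one_equiv])
      (Finset.univ.map (Fin.castAddEmb n)) (Fin.castAdd n) (Fin.castAdd_injective n n) χ hχ
    have hE : (Matrix.of fun x y : Fin n => ∑ s ∈ Finset.univ.map (Fin.castAddEmb n),
        star ((Matrix.reindex finSumFinEquiv finSumFinEquiv W) s (Fin.castAdd n x)) *
          (Matrix.reindex finSumFinEquiv finSumFinEquiv W) s (Fin.castAdd n y)) =
        (c : ℂ) • M := by
      ext x y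
      rw [Matrix.of_apply, Finset.sum_map, Matrix.smul_apply, smul_eq_mul, ← hG x y]
      simp
    rw [hE, aux_normImmanant_smul, Matrix.permanent_smul, Fintype.card_fin] at key
    have hcn : (0 : ℂ) < (c : ℂ) ^ n := by
      rw [← Complex.ofReal_pow]
      exact_mod_cast pow_pos hc n
    exact le_of_mul_le_mul_left key hcn
end
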